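/- arXiv:1903.09631 — 2 statements merged into one kernel-verified Lean document; each statement's English description precedes it below -/
import Mathlib

section
/- Let S be a nonempty finite set, p ≥ 1 and m ≥ 1 integers, and q : S × S^p → [0,1] a conditional probability mass function. Define the block kernel K ∈ ℝ^{S^p×S^p} by K_{b,b'} := q(b'₁|b) if (b'₂,…,b'_p) = (b₁,…,b_{p−1}) and 0 otherwise. For a history h = (h₁,…,h_p) ∈ S^p define the trajectory pmf on S^m by P_h(x₁,…,x_m) := Π_{t=1}^m q(x_t | (x_{t−1},…,x₁, h₁,…,h_{p−t+1})) where for t > p the history argument is (x_{t−1},…,x_{t−p}); here histories are listed most recent first. For 1 ≤ ℓ ≤ m let μ_h^{(ℓ)} be the marginal pmf of (x_ℓ,…,x_m) under P_h. Then for any h, h' ∈ S^p that agree in all coordinates except possibly the first (most recent) one, and for all 1 ≤ ℓ ≤ m: (1/2) Σ_{(x_ℓ,…,x_m)} |μ_h^{(ℓ)}(x_ℓ,…,x_m) − μ_{h'}^{(ℓ)}(x_ℓ,…,x_m)| ≤ τ₁(K^p)^{1+⌊(ℓ−1)/p⌋}. -/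
open Finset

/-- The Dobrushin ergodicity coefficient of a matrix `P`. -/
noncomputable def tau1 {T : Type*} [Fintype T] (P : Matrix T T ℝ) : ℝ :=
  sSup {r : ℝ | ∃ u : T → ℝ, u ≠ 0 ∧ (∑ x, u x) = 0 ∧
    r = (∑ x, |Matrix.vecMul u P x|) / (∑ x, |u x|)}

open Classical in
/-- The block kernel of a `p`-Markov process with conditional pmf `q`. -/
noncomputable def blockKernel {S : Type*} [Fintype S] (p : ℕ) (hp : 0 < p)
    (q : S → (Fin p → S) → ℝ) : Matrix (Fin p → S) (Fin p → S) ℝ :=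
  fun b b' =>
    if ∀ (j : Fin p), ∀ _h : (j : ℕ) < p - 1, b' ⟨(j : ℕ) + 1, by omega⟩ = b j then
      q (b' ⟨0, hp⟩) b
    else 0

/-- The history (most recent first) seen before step `t` (0-indexed) of a trajectory
`x` of length `m` started from the initial history `h`. -/
def histTraj {S : Type*} {p m : ℕ} (x : Fin m → S) (h : Fin p → S) (t : Fin m) :
    Fin p → S :=
  fun j =>
    if (j : ℕ) < (t : ℕ) then
      x ⟨(t : ℕ) - 1 - (j : ℕ),
        lt_of_le_of_lt (le_trans (Nat.sub_le _ _) (Nat.sub_le _ _)) t.isLt⟩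
    else
      h ⟨(j : ℕ) - (t : ℕ), lt_of_le_of_lt (Nat.sub_le _ _) j.isLt⟩

/-- Trajectory pmf `P_h` on `S^m` of the `p`-Markov process with conditional pmf `q`
started from the history `h`. -/
def trajPmf {S : Type*} [Fintype S] {p m : ℕ} (q : S → (Fin p → S) → ℝ)
    (h : Fin p → S) (x : Fin m → S) : ℝ :=
  ∏ t : Fin m, q (x t) (histTraj x h t)

/-- History after a whole trajectory `x` of length `n` started at `h`. -/
def endHist {S : Type*} {p n : ℕ} (x : Fin n → S) (h : Fin p → S) : Fin p → S :=
  fun j =>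
    if hj : (j : ℕ) < n then x ⟨n - 1 - (j : ℕ), by omega⟩
    else h ⟨(j : ℕ) - n, lt_of_le_of_lt (Nat.sub_le _ _) j.isLt⟩

theorem sum_append {S : Type*} [Fintype S] (s n : ℕ) (f : (Fin (s + n) → S) → ℝ) :
    ∑ x, f x = ∑ y : Fin s → S, ∑ z : Fin n → S, f (Fin.append y z) := by
  rw [← (Fin.appendEquiv s n).sum_comp, Fintype.sum_prod_type]
  rfl

theorem trajPmf_append {S : Type*} [Fintype S] {p s n : ℕ} (q : S → (Fin p → S) → ℝ)
    (h : Fin p → S) (y : Fin s → S) (z : Fin n → S) :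
    trajPmf q h (Fin.append y z) = trajPmf q h y * trajPmf q (endHist y h) z := by
  unfold trajPmf
  rw [Fin.prod_univ_add]
  congr 1
  · refine Finset.prod_congr rfl fun t _ => ?_
    rw [Fin.append_left]
    congr 1
    funext j
    simp only [histTraj, Fin.val_castAdd]
    split_ifs with hj
    · exact Fin.append_left y z ⟨(t : ℕ) - 1 - j, by omega⟩
    · rfl
  · refine Finset.prod_congr rfl fun t _ => ?_
    rw [Fin.append_right]
    congr 1
    funext j
    simp only [histTraj, endHist, Fin.val_natAdd]
    by_cases h1 : (j : ℕ) < t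
    · rw [if_pos (by omega), if_pos h1]
      rw [← Fin.append_right y z ⟨(t : ℕ) - 1 - j, by omega⟩]
      congr 1
      ext; simp; omega
    · rw [if_neg h1]
      by_cases h2 : (j : ℕ) < s + t
      · rw [if_pos h2, dif_pos (by omega)]
        rw [← Fin.append_left y z ⟨s - 1 - ((j : ℕ) - t), by omega⟩]
        congr 1
        ext; simp; omega
      · rw [if_neg h2, dif_neg (by omega)]
        congr 1
        ext; simp; omega

theorem trajPmf_one {S : Type*} [Fintype S] {p : ℕ} (q : S → (Fin p → S) → ℝ)
    (h : Fin p → S) (z : Fin 1 → S) : trajPmf q h z = q (z 0) h := by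
  have e : histTraj z h 0 = h := by
    funext j
    simp [histTraj]
  simp [trajPmf, e]

theorem sum_fin_one {S : Type*} [Fintype S] (f : (Fin 1 → S) → ℝ) :
    ∑ z, f z = ∑ a : S, f (fun _ => a) := by
  rw [← (Equiv.funUnique (Fin 1) S).symm.sum_comp]
  rfl

theorem endHist_append_one {S : Type*} {p s : ℕ} (y : Fin s → S) (a : S) (h : Fin p → S) :
    endHist (Fin.append y (fun _ : Fin 1 => a)) h =
      endHist (fun _ : Fin 1 => a) (endHist y h) := by
  funext j
  simp only [endHist]
  by_cases h0 : (j : ℕ) < 1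
  · rw [dif_pos (by omega), dif_pos h0]
    refine Eq.trans ?_ (Fin.append_right y (fun _ : Fin 1 => a) 0)
    congr 1
    apply Fin.ext
    show s + 1 - 1 - (j : ℕ) = s + 0
    omega
  · rw [dif_neg h0]
    by_cases h2 : (j : ℕ) < s + 1
    · rw [dif_pos h2, dif_pos (by omega)]
      rw [← Fin.append_left y (fun _ : Fin 1 => a) ⟨s - 1 - ((j : ℕ) - 1), by omega⟩]
      congr 1
      ext; simp; omega
    · rw [dif_neg h2, dif_neg (by omega)]
      congr 1
      ext; simp; omega

theorem blockKernel_eq {S : Type*} [Fintype S] [DecidableEq S] (p : ℕ) (hp : 0 < p)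
    (q : S → (Fin p → S) → ℝ) (c b : Fin p → S) :
    blockKernel p hp q c b =
      ∑ a : S, q a c * (if endHist (fun _ : Fin 1 => a) c = b then 1 else 0) := by
  have key : ∀ a : S, endHist (fun _ : Fin 1 => a) c = b ↔
      (a = b ⟨0, hp⟩ ∧ ∀ (j : Fin p), ∀ _h : (j : ℕ) < p - 1,
        b ⟨(j : ℕ) + 1, by omega⟩ = c j) := by
    intro a
    constructor
    · rintro rfl
      refine ⟨by simp [endHist], fun j hj => ?_⟩
      simp [endHist]
    · rintro ⟨rfl, h2⟩
      funext j
      by_cases h0 : (j : ℕ) < 1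
      · simp only [endHist, dif_pos h0]
        congr 1
        ext; simp; omega
      · simp only [endHist, dif_neg h0]
        rw [← h2 ⟨(j : ℕ) - 1, by omega⟩ (by simp; omega)]
        congr 1
        ext; simp; omega
  unfold blockKernel
  simp only [key]
  split_ifs with h1
  · simp only [mul_ite, mul_one, mul_zero]
    rw [Finset.sum_eq_single (b ⟨0, hp⟩)]
    · rw [if_pos ⟨rfl, h1⟩]
    · intro a _ ha
      rw [if_neg (fun h => ha h.1)]
    · simp
  · symm
    apply Finset.sum_eq_zero
    intro a _
    rw [if_neg (fun h => h1 h.2), mul_zero]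

theorem blockKernel_pow {S : Type*} [Fintype S] [DecidableEq S] (p : ℕ) (hp : 0 < p)
    (q : S → (Fin p → S) → ℝ) (n : ℕ) (h b : Fin p → S) :
    (blockKernel p hp q ^ n) h b =
      ∑ x : Fin n → S, trajPmf q h x * (if endHist x h = b then 1 else 0) := by
  induction n generalizing b with
  | zero =>
    have e : ∀ x : Fin 0 → S, endHist x h = h := by
      intro x
      funext j
      simp [endHist]
    simp only [e]
    simp [Matrix.one_apply, trajPmf]
  | succ n ih =>
    rw [pow_succ, Matrix.mul_apply, sum_append]
    simp only [ih, sum_fin_one, trajPmf_append, endHist_append_one, trajPmf_one]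
    simp only [Finset.sum_mul]
    rw [Finset.sum_comm]
    refine Finset.sum_congr rfl fun x _ => ?_
    simp only [mul_assoc, ← Finset.mul_sum]
    rw [← blockKernel_eq p hp q (endHist x h) b]
    simp

theorem sum_pow_mul {S : Type*} [Fintype S] [DecidableEq S] (p : ℕ) (hp : 0 < p)
    (q : S → (Fin p → S) → ℝ) (n : ℕ) (h : Fin p → S) (F : (Fin p → S) → ℝ) :
    ∑ c, (blockKernel p hp q ^ n) h c * F c =
      ∑ x : Fin n → S, trajPmf q h x * F (endHist x h) := by
  simp only [blockKernel_pow, Finset.sum_mul]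
  rw [Finset.sum_comm]
  refine Finset.sum_congr rfl fun x _ => ?_
  simp [mul_assoc, ← Finset.mul_sum]

theorem trajPmf_nonneg {S : Type*} [Fintype S] {p n : ℕ} (q : S → (Fin p → S) → ℝ)
    (hq0 : ∀ ξ b, 0 ≤ q ξ b) (h : Fin p → S) (x : Fin n → S) : 0 ≤ trajPmf q h x :=
  Finset.prod_nonneg fun _ _ => hq0 _ _

theorem trajPmf_sum {S : Type*} [Fintype S] {p : ℕ} (q : S → (Fin p → S) → ℝ)
    (hqsum : ∀ b, (∑ ξ : S, q ξ b) = 1) (n : ℕ) (h : Fin p → S) :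
    ∑ x : Fin n → S, trajPmf q h x = 1 := by
  induction n with
  | zero => simp [trajPmf]
  | succ n ih =>
    rw [sum_append]
    simp only [sum_fin_one, trajPmf_append, trajPmf_one, ← Finset.mul_sum, hqsum, mul_one, ih]

/-- l1 norm of the law of a trajectory of length `n` from a signed initial vector. -/
noncomputable def trajNorm {S : Type*} [Fintype S] {p : ℕ} (q : S → (Fin p → S) → ℝ)
    (u : (Fin p → S) → ℝ) (n : ℕ) : ℝ :=
  ∑ x : Fin n → S, |∑ b, u b * trajPmf q b x|

theorem trajNorm_succ {S : Type*} [Fintype S] {p : ℕ} (q : S → (Fin p → S) → ℝ)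
    (u : (Fin p → S) → ℝ) (n : ℕ) :
    trajNorm q u (n + 1) =
      ∑ x : Fin n → S, ∑ a : S, |∑ b, u b * (trajPmf q b x * q a (endHist x b))| := by
  unfold trajNorm
  rw [sum_append]
  simp only [sum_fin_one, trajPmf_append, trajPmf_one]

theorem trajNorm_mono {S : Type*} [Fintype S] {p : ℕ} (q : S → (Fin p → S) → ℝ)
    (hqsum : ∀ b, (∑ ξ : S, q ξ b) = 1)
    (u : (Fin p → S) → ℝ) (n : ℕ) : trajNorm q u n ≤ trajNorm q u (n + 1) := by
  rw [trajNorm_succ]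
  refine Finset.sum_le_sum fun x _ => ?_
  refine le_trans (le_of_eq ?_) (Finset.abs_sum_le_sum_abs _ _)
  rw [Finset.sum_comm]
  simp only [← Finset.mul_sum, hqsum, mul_one]

theorem trajNorm_stable {S : Type*} [Fintype S] {p : ℕ} (q : S → (Fin p → S) → ℝ)
    (hq0 : ∀ ξ b, 0 ≤ q ξ b) (hqsum : ∀ b, (∑ ξ : S, q ξ b) = 1)
    (u : (Fin p → S) → ℝ) (n : ℕ) (hn : p ≤ n) :
    trajNorm q u (n + 1) = trajNorm q u n := by
  rw [trajNorm_succ]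
  refine Finset.sum_congr rfl fun x _ => ?_
  rcases isEmpty_or_nonempty (Fin p → S) with hE | ⟨⟨c⟩⟩
  · simp
  have he : ∀ b, endHist x b = endHist x c := by
    intro b
    funext j
    have : (j : ℕ) < n := by omega
    simp [endHist, this]
  simp only [he, ← mul_assoc, ← Finset.sum_mul, abs_mul, ← Finset.mul_sum]
  simp only [abs_of_nonneg (hq0 _ _), hqsum, mul_one]

theorem trajNorm_le {S : Type*} [Fintype S] {p : ℕ} (q : S → (Fin p → S) → ℝ)
    (hq0 : ∀ ξ b, 0 ≤ q ξ b) (hqsum : ∀ b, (∑ ξ : S, q ξ b) = 1)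
    (u : (Fin p → S) → ℝ) (n : ℕ) : trajNorm q u n ≤ trajNorm q u p := by
  rcases le_total n p with hn | hn
  · exact monotone_nat_of_le_succ (trajNorm_mono q hqsum u) hn
  · induction n, hn using Nat.le_induction with
    | base => exact le_rfl
    | succ n hn ih => rw [trajNorm_stable q hq0 hqsum u n hn]; exact ih

theorem trajNorm_p {S : Type*} [Fintype S] [DecidableEq S] {p : ℕ} (hp : 0 < p)
    (q : S → (Fin p → S) → ℝ) (u : (Fin p → S) → ℝ) :
    trajNorm q u p = ∑ b, |Matrix.vecMul u (blockKernel p hp q ^ p) b| := by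
  unfold trajNorm
  rw [← ((Equiv.arrowCongr (Fin.revPerm (n := p)) (Equiv.refl S))).sum_comp]
  refine Finset.sum_congr rfl fun x _ => ?_
  simp only [Matrix.vecMul, dotProduct]
  congr 1
  refine Finset.sum_congr rfl fun b _ => ?_
  rw [blockKernel_pow]
  congr 1
  have he : ∀ y : Fin p → S, endHist y b = fun j => y (Fin.rev j) := by
    intro y
    funext j
    simp only [endHist, j.isLt, dif_pos]
    congr 1
    ext; simp; omega
  rw [Finset.sum_eq_single ((Equiv.arrowCongr (Fin.revPerm (n := p)) (Equiv.refl S)) x)]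
  · rw [if_pos, mul_one]
    rw [he]
    funext j
    simp
  · intro y _ hy
    rw [if_neg, mul_zero]
    rintro rfl
    apply hy
    rw [he]
    funext j
    simp
  · simp

theorem tau1_bound {T : Type*} [Fintype T] (P : Matrix T T ℝ) (hP0 : ∀ a b, 0 ≤ P a b)
    (hP1 : ∀ a, ∑ b, P a b = 1) (u : T → ℝ) (hu : ∑ x, u x = 0) :
    ∑ x, |Matrix.vecMul u P x| ≤ tau1 P * ∑ x, |u x| := by
  have hle : ∀ v : T → ℝ, ∑ x, |Matrix.vecMul v P x| ≤ ∑ x, |v x| := by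
    intro v
    calc ∑ x, |Matrix.vecMul v P x| ≤ ∑ x, ∑ y, |v y| * P y x := by
          refine Finset.sum_le_sum fun x _ => ?_
          refine le_trans (Finset.abs_sum_le_sum_abs _ _) (le_of_eq ?_)
          refine Finset.sum_congr rfl fun y _ => ?_
          rw [abs_mul, abs_of_nonneg (hP0 y x)]
      _ = ∑ x, |v x| := by
          rw [Finset.sum_comm]
          simp only [← Finset.mul_sum, hP1, mul_one]
  by_cases h0 : u = 0
  · subst h0; simp
  have hpos : 0 < ∑ x, |u x| := by
    obtain ⟨x, hx⟩ := Function.ne_iff.mp h0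
    exact Finset.sum_pos' (fun _ _ => abs_nonneg _) ⟨x, Finset.mem_univ _, abs_pos.mpr hx⟩
  rw [← div_le_iff₀ hpos]
  refine le_csSup ⟨1, ?_⟩ ⟨u, h0, hu, rfl⟩
  rintro r ⟨v, -, -, rfl⟩
  exact div_le_one_of_le₀ (hle v) (Finset.sum_nonneg fun _ _ => abs_nonneg _)

theorem tau1_nonneg {T : Type*} [Fintype T] (P : Matrix T T ℝ) : 0 ≤ tau1 P := by
  apply Real.sSup_nonneg
  rintro r ⟨v, -, -, rfl⟩
  positivity

theorem sum_vecMul {T : Type*} [Fintype T] (P : Matrix T T ℝ)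
    (hP1 : ∀ a, ∑ b, P a b = 1) (u : T → ℝ) :
    ∑ x, Matrix.vecMul u P x = ∑ x, u x := by
  simp only [Matrix.vecMul, dotProduct]
  rw [Finset.sum_comm]
  simp only [← Finset.mul_sum, hP1, mul_one]

theorem tau1_pow {T : Type*} [Fintype T] [DecidableEq T] (P : Matrix T T ℝ)
    (hP0 : ∀ a b, 0 ≤ P a b) (hP1 : ∀ a, ∑ b, P a b = 1) (u : T → ℝ) (hu : ∑ x, u x = 0)
    (k : ℕ) :
    ∑ x, Matrix.vecMul u (P ^ k) x = 0 ∧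
    ∑ x, |Matrix.vecMul u (P ^ k) x| ≤ tau1 P ^ k * ∑ x, |u x| := by
  induction k with
  | zero => simp [hu]
  | succ k ih =>
    rw [pow_succ, ← Matrix.vecMul_vecMul]
    refine ⟨by rw [sum_vecMul P hP1]; exact ih.1, ?_⟩
    refine (tau1_bound P hP0 hP1 _ ih.1).trans ?_
    rw [pow_succ', mul_assoc]
    exact mul_le_mul_of_nonneg_left ih.2 (tau1_nonneg P)

/-- Marginal rewriting. -/
theorem marginal_eq {S : Type*} [Fintype S] [DecidableEq S] (p s n : ℕ) (hp : 0 < p)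
    (q : S → (Fin p → S) → ℝ) (h : Fin p → S) (z : Fin n → S) :
    (∑ x ∈ Finset.univ.filter (fun x : Fin (s + n) → S => ∀ j : Fin n, x (Fin.natAdd s j) = z j),
      trajPmf q h x) = ∑ c, (blockKernel p hp q ^ s) h c * trajPmf q c z := by
  rw [sum_pow_mul p hp q s h (fun c => trajPmf q c z), Finset.sum_filter, sum_append]
  refine Finset.sum_congr rfl fun y _ => ?_
  simp only [Fin.append_right, ← funext_iff, Finset.sum_ite_eq', Finset.mem_univ, if_true,
    trajPmf_append]

/-- Identification of the tail index type. -/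
def tailEquiv (s n : ℕ) : Fin n ≃ {j : Fin (s + n) // s + 1 ≤ (j : ℕ) + 1} where
  toFun j := ⟨Fin.natAdd s j, by simp⟩
  invFun j := ⟨(j.1 : ℕ) - s, by have := j.2; have := j.1.2; omega⟩
  left_inv j := by ext; simp
  right_inv j := by
    have := j.2
    ext; simp; omega

/-- for two initial histories agreeing except possibly in the most
recent coordinate, the total-variation distance between the marginal laws of
`(x_ℓ,…,x_m)` is at most `τ₁(K^p)^{1+⌊(ℓ−1)/p⌋}`. -/
theorem stmt10 {S : Type*} [Fintype S] [Nonempty S] [DecidableEq S]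
    (p m ℓ : ℕ) (hp : 0 < p) (hm : 0 < m) (hℓ1 : 1 ≤ ℓ) (hℓm : ℓ ≤ m)
    (q : S → (Fin p → S) → ℝ)
    (hq0 : ∀ ξ b, 0 ≤ q ξ b) (hq1 : ∀ ξ b, q ξ b ≤ 1)
    (hqsum : ∀ b, (∑ ξ : S, q ξ b) = 1)
    (h h' : Fin p → S) (hagree : ∀ j : Fin p, (j : ℕ) ≠ 0 → h j = h' j) :
    (1 / 2) * (∑ w : {j : Fin m // ℓ ≤ (j : ℕ) + 1} → S,
        |(∑ x ∈ Finset.univ.filter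
            (fun x : Fin m → S => ∀ j : {j : Fin m // ℓ ≤ (j : ℕ) + 1}, x j.1 = w j),
            trajPmf q h x) -
         (∑ x ∈ Finset.univ.filter
            (fun x : Fin m → S => ∀ j : {j : Fin m // ℓ ≤ (j : ℕ) + 1}, x j.1 = w j),
            trajPmf q h' x)|) ≤
      tau1 (blockKernel p hp q ^ p) ^ (1 + (ℓ - 1) / p) := by
  obtain ⟨s, rfl⟩ : ∃ s, ℓ = s + 1 := ⟨ℓ - 1, by omega⟩
  obtain ⟨n, rfl⟩ : ∃ n, m = s + n := ⟨m - s, by omega⟩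
  set K := blockKernel p hp q with hK
  have hpow0 : ∀ k a b, 0 ≤ (K ^ k) a b := by
    intro k a b
    rw [hK, blockKernel_pow]
    refine Finset.sum_nonneg fun x _ => mul_nonneg (trajPmf_nonneg q hq0 _ _) ?_
    split_ifs <;> norm_num
  have hpow1 : ∀ k a, ∑ b, (K ^ k) a b = 1 := by
    intro k a
    have := sum_pow_mul p hp q k a (fun _ => 1)
    simpa only [mul_one, trajPmf_sum q hqsum] using this
  let u : (Fin p → S) → ℝ := fun b => (if h = b then 1 else 0) - (if h' = b then 1 else 0)
  have hu : ∑ b, u b = 0 := by simp [u]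
  have hu2 : ∑ b, |u b| ≤ 2 := by
    calc ∑ b, |u b| ≤ ∑ b, ((if h = b then (1 : ℝ) else 0) + (if h' = b then 1 else 0)) := by
          refine Finset.sum_le_sum fun b _ => ?_
          simp only [u]
          split_ifs <;> norm_num
      _ = 2 := by rw [Finset.sum_add_distrib]; simp; norm_num
  have huK : ∀ k c, Matrix.vecMul u (K ^ k) c = (K ^ k) h c - (K ^ k) h' c := by
    intro k c
    simp [Matrix.vecMul, dotProduct, u, sub_mul, Finset.sum_sub_distrib]
  have hL : (∑ w : {j : Fin (s + n) // s + 1 ≤ (j : ℕ) + 1} → S,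
        |(∑ x ∈ Finset.univ.filter
            (fun x : Fin (s + n) → S =>
              ∀ j : {j : Fin (s + n) // s + 1 ≤ (j : ℕ) + 1}, x j.1 = w j),
            trajPmf q h x) -
         (∑ x ∈ Finset.univ.filter
            (fun x : Fin (s + n) → S =>
              ∀ j : {j : Fin (s + n) // s + 1 ≤ (j : ℕ) + 1}, x j.1 = w j),
            trajPmf q h' x)|) = trajNorm q (Matrix.vecMul u (K ^ s)) n := by
    unfold trajNorm
    rw [← (Equiv.arrowCongr (tailEquiv s n) (Equiv.refl S)).sum_comp]
    refine Finset.sum_congr rfl fun z _ => ?_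
    have hf : ∀ x : Fin (s + n) → S,
        (∀ j : {j : Fin (s + n) // s + 1 ≤ (j : ℕ) + 1},
          x j.1 = (Equiv.arrowCongr (tailEquiv s n) (Equiv.refl S)) z j) ↔
        ∀ j : Fin n, x (Fin.natAdd s j) = z j := by
      intro x
      rw [← (tailEquiv s n).forall_congr_right]
      refine forall_congr' fun j => ?_
      simp [Equiv.arrowCongr_apply]
      rfl
    simp only [hf]
    rw [marginal_eq p s n hp q h z, marginal_eq p s n hp q h' z, ← Finset.sum_sub_distrib]
    congr 1
    refine Finset.sum_congr rfl fun c _ => ?_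
    rw [huK, sub_mul]
  rw [hL]
  have h1 : trajNorm q (Matrix.vecMul u (K ^ s)) n ≤
      ∑ b, |Matrix.vecMul (Matrix.vecMul u (K ^ s)) (K ^ p) b| := by
    rw [← trajNorm_p hp q]
    exact trajNorm_le q hq0 hqsum _ n
  have h2 : Matrix.vecMul (Matrix.vecMul u (K ^ s)) (K ^ p) =
      Matrix.vecMul (Matrix.vecMul u (K ^ (s % p))) ((K ^ p) ^ (1 + s / p)) := by
    rw [Matrix.vecMul_vecMul, Matrix.vecMul_vecMul, ← pow_mul, ← pow_add, ← pow_add]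
    congr 2
    have := Nat.mod_add_div s p
    rw [mul_add]
    omega
  have h3 : ∑ b, |Matrix.vecMul u (K ^ (s % p)) b| ≤ 2 := by
    calc ∑ b, |Matrix.vecMul u (K ^ (s % p)) b|
        ≤ ∑ b, ((K ^ (s % p)) h b + (K ^ (s % p)) h' b) := by
          refine Finset.sum_le_sum fun b _ => ?_
          rw [huK, abs_le]
          have := hpow0 (s % p) h b
          have := hpow0 (s % p) h' b
          constructor <;> linarith
      _ = 2 := by rw [Finset.sum_add_distrib, hpow1, hpow1]; norm_num
  have h4 := (tau1_pow (K ^ p) (hpow0 p) (hpow1 p) (Matrix.vecMul u (K ^ (s % p)))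
    (by rw [sum_vecMul _ (hpow1 _), hu]) (1 + s / p)).2
  rw [h2] at h1
  have h5 := mul_le_mul_of_nonneg_left h3 (pow_nonneg (tau1_nonneg (K ^ p)) (1 + s / p))
  simp only [Nat.add_sub_cancel]
  linarith
end

section
/- There exist universal constants C₁ > 0 and C₂ > 0 with the following property. Let n, N, d be positive integers with Nd ≥ 2, and let 𝖷 ∈ ℝ^{n×d} be a matrix whose columns satisfy ‖𝖷_{*j}‖₂ ≤ √n for all j ∈ [d]. Define the pseudometric ρ on ℝ^{N×d} by ρ(D₁, D₂) := (1/√n)·‖𝖷(D₁−D₂)ᵀ‖_F, and the ℓ1 ball B₁(u) := {D ∈ ℝ^{N×d} : Σ_{i,j}|D_{ij}| ≤ u} for u > 0. Then for every u > 0 and every ε with 0 < ε ≤ C₁u, there exists a finite set T ⊆ ℝ^{N×d} with |T| ≤ exp( C₂ · (u²/ε²) · log(Nd) ) such that every D ∈ B₁(u) satisfies ρ(D, D') ≤ ε for some D' ∈ T. -/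
open Finset

/-- Greedy (derandomized) Maurey empirical method. -/
theorem maurey_aux {A κ : Type*} [Fintype A] [Fintype κ] (p : A → ℝ) (hp : ∀ a, 0 ≤ p a)
    (hp1 : ∑ a, p a = 1) (v : A → κ → ℝ) (R : ℝ) (hv : ∀ a, ∑ k, (v a k) ^ 2 ≤ R)
    (x : κ → ℝ) (hx : ∀ k, x k = ∑ a, p a * v a k) (K : ℕ) :
    ∃ s : Fin K → A, ∑ k, ((K : ℝ) * x k - ∑ m, v (s m) k) ^ 2 ≤ K * R := by
  induction K with
  | zero => exact ⟨Fin.elim0, by simp⟩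
  | succ K ih =>
    obtain ⟨s, hs⟩ := ih
    set S : κ → ℝ := fun k => (K : ℝ) * x k - ∑ m, v (s m) k with hS
    have key : ∃ a, ∑ k, (S k + x k - v a k) ^ 2 ≤ ∑ k, (S k) ^ 2 + R := by
      by_contra! hcon
      have h1 : ∑ a, p a * (∑ k, (S k) ^ 2 + R) < ∑ a, p a * ∑ k, (S k + x k - v a k) ^ 2 := by
        apply Finset.sum_lt_sum
        · intro a _
          exact mul_le_mul_of_nonneg_left (hcon a).le (hp a)
        · have : ∃ a ∈ (Finset.univ : Finset A), 0 < p a := by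
            apply Finset.exists_lt_of_sum_lt
            simp [hp1]
          obtain ⟨a, ha, hpa⟩ := this
          exact ⟨a, ha, mul_lt_mul_of_pos_left (hcon a) hpa⟩
      rw [← Finset.sum_mul, hp1, one_mul] at h1
      have h2 : ∑ a, p a * ∑ k, (S k + x k - v a k) ^ 2
          = ∑ k, (S k ^ 2 - x k ^ 2) + ∑ a, p a * ∑ k, (v a k) ^ 2 := by
        simp only [Finset.mul_sum]
        rw [Finset.sum_comm, Finset.sum_comm (f := fun a k => p a * (v a k) ^ 2),
          ← Finset.sum_add_distrib]
        refine Finset.sum_congr rfl fun k _ => ?_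
        have : ∀ a, p a * (S k + x k - v a k) ^ 2
            = p a * (S k + x k) ^ 2 - 2 * (S k + x k) * (p a * v a k) + p a * (v a k) ^ 2 := by
          intro a; ring
        simp only [this, Finset.sum_add_distrib, Finset.sum_sub_distrib]
        rw [← Finset.sum_mul, ← Finset.mul_sum, hp1, ← hx k]
        ring
      have h3 : ∑ a, p a * ∑ k, (v a k) ^ 2 ≤ R := by
        calc _ ≤ ∑ a, p a * R :=
              Finset.sum_le_sum fun a _ => mul_le_mul_of_nonneg_left (hv a) (hp a)
          _ = R := by rw [← Finset.sum_mul, hp1, one_mul]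
      have h4 : ∑ k, (S k ^ 2 - x k ^ 2) ≤ ∑ k, S k ^ 2 :=
        Finset.sum_le_sum fun k _ => by nlinarith [sq_nonneg (x k)]
      linarith
    obtain ⟨a, ha⟩ := key
    refine ⟨Fin.cons a s, ?_⟩
    have : ∀ k, ((K + 1 : ℕ) : ℝ) * x k - ∑ m, v ((Fin.cons a s : Fin (K + 1) → A) m) k
        = S k + x k - v a k := by
      intro k
      rw [Fin.sum_univ_succ]
      simp only [Fin.cons_zero, Fin.cons_succ, hS]
      push_cast
      ring
    simp only [this]
    push_cast
    linarith

/-- The atoms: zero and `± u e_{ij}`. -/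
noncomputable def atomW (N d : ℕ) (u : ℝ) :
    Option ((Fin N × Fin d) × Bool) → Fin N → Fin d → ℝ
  | none => fun _ _ => 0
  | some (q, b) => fun i j => if (i, j) = q then (if b then u else -u) else 0

/-- The weights. -/
noncomputable def atomP (N d : ℕ) (u : ℝ) (D : Fin N → Fin d → ℝ) :
    Option ((Fin N × Fin d) × Bool) → ℝ
  | none => 1 - (∑ i, ∑ j, |D i j|) / u
  | some (q, b) => (if b then max (D q.1 q.2) 0 else max (-D q.1 q.2) 0) / u

theorem max_add_aux (x : ℝ) : max x 0 + max (-x) 0 = |x| := by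
  rcases le_total 0 x with h | h
  · rw [max_eq_left h, max_eq_right (by linarith), abs_of_nonneg h, add_zero]
  · rw [max_eq_right h, max_eq_left (by linarith), abs_of_nonpos h, zero_add]

theorem max_sub_aux (x : ℝ) : max x 0 - max (-x) 0 = x := by
  rcases le_total 0 x with h | h
  · rw [max_eq_left h, max_eq_right (by linarith), sub_zero]
  · rw [max_eq_right h, max_eq_left (by linarith)]; ring

theorem atomP_nonneg (N d : ℕ) (u : ℝ) (hu : 0 < u) (D : Fin N → Fin d → ℝ)
    (hD : ∑ i, ∑ j, |D i j| ≤ u) (a) : 0 ≤ atomP N d u D a := by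
  rcases a with _ | ⟨q, b⟩
  · simp only [atomP]
    rw [sub_nonneg, div_le_one hu]
    exact hD
  · cases b <;> simp only [atomP] <;> simp <;> positivity

theorem atomP_sum (N d : ℕ) (u : ℝ) (D : Fin N → Fin d → ℝ) :
    ∑ a, atomP N d u D a = 1 := by
  rw [Fintype.sum_option, Fintype.sum_prod_type]
  simp only [Fintype.sum_bool, atomP, if_true, Bool.false_eq_true, if_false, ← add_div,
    max_add_aux]
  rw [← Finset.sum_div, Fintype.sum_prod_type]
  ring

theorem atomP_mean (N d : ℕ) (u : ℝ) (hu : 0 < u) (D : Fin N → Fin d → ℝ) (i : Fin N)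
    (j : Fin d) : ∑ a, atomP N d u D a * atomW N d u a i j = D i j := by
  rw [Fintype.sum_option, Fintype.sum_prod_type]
  simp only [Fintype.sum_bool, atomP, atomW, if_true, Bool.false_eq_true, if_false, mul_zero,
    zero_add, mul_ite]
  have : ∀ q : Fin N × Fin d,
      ((if (i, j) = q then max (D q.1 q.2) 0 / u * u else 0)
        + (if (i, j) = q then max (-D q.1 q.2) 0 / u * -u else 0))
      = if (i, j) = q then D q.1 q.2 else 0 := by
    intro q
    split_ifs
    · rw [mul_neg, div_mul_cancel₀ _ hu.ne', div_mul_cancel₀ _ hu.ne', ← sub_eq_add_neg,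
        max_sub_aux]
    · simp
  simp only [this]
  simp

theorem atomW_norm (n N d : ℕ) (X : Fin n → Fin d → ℝ) (hX : ∀ j, ∑ t, (X t j) ^ 2 ≤ (n : ℝ))
    (u : ℝ) (a) :
    ∑ k : Fin n × Fin N, (∑ j, X k.1 j * atomW N d u a k.2 j) ^ 2 ≤ n * u ^ 2 := by
  rcases a with _ | ⟨⟨i, j⟩, b⟩
  · simp [atomW]; positivity
  · have h : ∀ k : Fin n × Fin N,
        (∑ j', X k.1 j' * atomW N d u (some ((i, j), b)) k.2 j') ^ 2
          = if k.2 = i then (X k.1 j) ^ 2 * u ^ 2 else 0 := by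
      intro k
      simp only [atomW, Prod.mk.injEq]
      by_cases hk : k.2 = i
      · cases b <;> simp [hk] <;> ring
      · simp [hk]
    simp only [h]
    rw [Fintype.sum_prod_type]
    simp only [Finset.sum_ite_eq', Finset.mem_univ, if_true]
    rw [← Finset.sum_mul]
    exact mul_le_mul_of_nonneg_right (hX j) (sq_nonneg u)

/-- metric entropy bound for the elementwise `ℓ1` ball of matrices with
respect to the design-induced pseudometric `ρ(D₁,D₂) = (1/√n)‖𝖷(D₁−D₂)ᵀ‖_F`. -/
theorem stmt17 :
    ∃ C₁ : ℝ, 0 < C₁ ∧ ∃ C₂ : ℝ, 0 < C₂ ∧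
      ∀ (n N d : ℕ), 1 ≤ n → 1 ≤ N → 1 ≤ d → 2 ≤ N * d →
      ∀ X : Fin n → Fin d → ℝ,
        (∀ j, Real.sqrt (∑ t, (X t j) ^ 2) ≤ Real.sqrt (n : ℝ)) →
      ∀ u : ℝ, 0 < u → ∀ ε : ℝ, 0 < ε → ε ≤ C₁ * u →
      ∃ T : Finset (Fin N → Fin d → ℝ),
        (T.card : ℝ) ≤
          Real.exp (C₂ * (u ^ 2 / ε ^ 2) * Real.log ((N : ℝ) * (d : ℝ))) ∧
        ∀ D : Fin N → Fin d → ℝ, (∑ i, ∑ j, |D i j|) ≤ u →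
          ∃ D' ∈ T,
            (1 / Real.sqrt (n : ℝ)) *
              Real.sqrt (∑ t, ∑ i, (∑ j, X t j * (D i j - D' i j)) ^ 2) ≤ ε := by
  classical
  refine ⟨1, one_pos, 6, by norm_num, ?_⟩
  intro n N d hn hN hd hNd X hX u hu ε hε hεu
  rw [one_mul] at hεu
  have hX' : ∀ j, ∑ t, (X t j) ^ 2 ≤ (n : ℝ) := fun j =>
    (Real.sqrt_le_sqrt_iff (by positivity)).1 (hX j)
  have hr : 1 ≤ u ^ 2 / ε ^ 2 := by
    rw [one_le_div (by positivity)]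
    exact pow_le_pow_left₀ hε.le hεu 2
  set r := u ^ 2 / ε ^ 2 with hrdef
  set K : ℕ := ⌈r⌉₊ with hK
  have hK1 : r ≤ K := Nat.le_ceil r
  have hK2 : (K : ℝ) ≤ 2 * r := by
    have := Nat.ceil_lt_add_one (a := r) (by linarith)
    linarith
  have hKpos : (0 : ℝ) < K := by linarith
  refine ⟨Finset.univ.image
    (fun (s : Fin K → Option ((Fin N × Fin d) × Bool)) (i : Fin N) (j : Fin d) =>
      (1 / (K : ℝ)) * ∑ m, atomW N d u (s m) i j), ?_, ?_⟩
  · have h1 := Finset.card_image_le (s := (Finset.univ :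
      Finset (Fin K → Option ((Fin N × Fin d) × Bool))))
      (f := fun s (i : Fin N) (j : Fin d) => (1 / (K : ℝ)) * ∑ m, atomW N d u (s m) i j)
    have h2 : (Finset.univ : Finset (Fin K → Option ((Fin N × Fin d) × Bool))).card
        = (N * d * 2 + 1) ^ K := by
      simp
    rw [h2] at h1
    have h3 : N * d * 2 + 1 ≤ (N * d) ^ 3 := by
      generalize N * d = m at hNd
      nlinarith [mul_le_mul hNd hNd (by norm_num) (by omega), Nat.pow_le_pow_left hNd 3]
    have h4 := h1.trans (Nat.pow_le_pow_left h3 K)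
    have hm : (2 : ℝ) ≤ (N : ℝ) * d := by exact_mod_cast hNd
    have hlog : 0 ≤ Real.log ((N : ℝ) * d) := Real.log_nonneg (by linarith)
    refine (Nat.cast_le (α := ℝ).2 h4).trans ?_
    push_cast
    rw [← pow_mul, ← Real.exp_log (x := ((N : ℝ) * d) ^ (3 * K)) (by positivity), Real.log_pow]
    apply Real.exp_le_exp.2
    apply mul_le_mul_of_nonneg_right _ hlog
    push_cast
    linarith
  · intro D hD
    obtain ⟨s, hs⟩ := maurey_aux (atomP N d u D) (atomP_nonneg N d u hu D hD)
      (atomP_sum N d u D) (fun a (k : Fin n × Fin N) => ∑ j, X k.1 j * atomW N d u a k.2 j)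
      (n * u ^ 2) (atomW_norm n N d X hX' u) (fun k => ∑ j, X k.1 j * D k.2 j)
      (by
        intro k
        simp only [Finset.mul_sum]
        rw [Finset.sum_comm]
        refine Finset.sum_congr rfl fun j _ => ?_
        rw [← atomP_mean N d u hu D k.2 j, Finset.mul_sum]
        refine Finset.sum_congr rfl fun a _ => ?_
        ring) K
    refine ⟨_, Finset.mem_image_of_mem _ (Finset.mem_univ s), ?_⟩
    have hterm : ∀ t i, (∑ j, X t j * (D i j - (1 / (K : ℝ)) * ∑ m, atomW N d u (s m) i j))
        = (1 / (K : ℝ)) * ((K : ℝ) * (∑ j, X t j * D i j)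
          - ∑ m, ∑ j, X t j * atomW N d u (s m) i j) := by
      intro t i
      rw [Finset.sum_comm, mul_sub, ← mul_assoc, one_div, inv_mul_cancel₀ hKpos.ne', one_mul,
        Finset.mul_sum, ← Finset.sum_sub_distrib]
      refine Finset.sum_congr rfl fun j _ => ?_
      rw [← Finset.mul_sum]
      ring
    simp only [hterm, mul_pow]
    rw [Fintype.sum_prod_type] at hs
    simp only [← Finset.mul_sum]
    simp only [← Finset.mul_sum] at hs
    have hnpos : (0 : ℝ) < n := by exact_mod_cast hn
    have hfin : (1 / (K : ℝ)) ^ 2 * ((K : ℝ) * (n * u ^ 2)) ≤ n * ε ^ 2 := by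
      have : u ^ 2 ≤ K * ε ^ 2 := by
        rw [hrdef, div_le_iff₀ (by positivity)] at hK1
        exact hK1
      have e : (1 / (K : ℝ)) ^ 2 * ((K : ℝ) * (n * u ^ 2)) = n * (u ^ 2 / K) := by
        field_simp
      rw [e]
      apply mul_le_mul_of_nonneg_left _ hnpos.le
      rw [div_le_iff₀ hKpos]
      linarith
    have hle := (mul_le_mul_of_nonneg_left hs (by positivity : (0 : ℝ) ≤ (1 / (K : ℝ)) ^ 2)).trans
      hfin
    have hsq := Real.sqrt_le_sqrt hle
    rw [Real.sqrt_mul hnpos.le, Real.sqrt_sq hε.le] at hsq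
    rw [one_div_mul_eq_div, div_le_iff₀ (Real.sqrt_pos.2 hnpos)]
    linarith
end
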